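/- If n ≥ 9 is odd, then for every 5-multigraph on n−6 vertices without three crossing pairs with total number of edges e, one has (b(n−6) + (n−9)/2) + e + C(n−6,2) + 10(n−6) + 20 < b(n). -/

import Mathlib

/-- A `3`-uniform hypergraph (given by its edge set `E`) contains the Fano plane if
there are seven distinct vertices `v 0, …, v 6` such that the seven triples below
(the lines of the projective plane over `GF(2)`) are all edges. -/
def ContainsFano {α : Type*} [DecidableEq α] (E : Finset (Finset α)) : Prop :=
  ∃ v : Fin 7 → α, Function.Injective v ∧
    ({v 0, v 1, v 2} : Finset α) ∈ E ∧ ({v 2, v 3, v 4} : Finset α) ∈ E ∧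
    ({v 0, v 4, v 5} : Finset α) ∈ E ∧ ({v 0, v 3, v 6} : Finset α) ∈ E ∧
    ({v 2, v 5, v 6} : Finset α) ∈ E ∧ ({v 1, v 4, v 6} : Finset α) ∈ E ∧
    ({v 1, v 3, v 5} : Finset α) ∈ E

/-- `b n = C(n,3) − C(⌊n/2⌋,3) − C(⌈n/2⌉,3)`, the number of edges of the balanced,
complete, bipartite `3`-uniform hypergraph on `n` vertices. -/
def b (n : ℕ) : ℕ := n.choose 3 - (n / 2).choose 3 - ((n + 1) / 2).choose 3

/-- A `p`-multigraph `G` (a `p`-tuple of simple graphs on a common vertex set) contains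
three crossing pairs if there are three distinct indices `i, j, k` and four distinct
vertices `w, x, y, z` with `wx, yz ∈ G i`, `wy, xz ∈ G j`, and `wz, xy ∈ G k`. -/
def HasThreeCrossingPairs {p : ℕ} {V : Type*} (G : Fin p → SimpleGraph V) : Prop :=
  ∃ i j k : Fin p, i ≠ j ∧ i ≠ k ∧ j ≠ k ∧
    ∃ w x y z : V, w ≠ x ∧ w ≠ y ∧ w ≠ z ∧ x ≠ y ∧ x ≠ z ∧ y ≠ z ∧
      (G i).Adj w x ∧ (G i).Adj y z ∧
      (G j).Adj w y ∧ (G j).Adj x z ∧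
      (G k).Adj w z ∧ (G k).Adj x y

lemma sdr_aux (A B C : Finset (Fin 5)) (hA : 1 ≤ A.card) (hB : 2 ≤ B.card) (hC : 3 ≤ C.card) :
    ∃ i j k, i ∈ A ∧ j ∈ B ∧ k ∈ C ∧ i ≠ j ∧ i ≠ k ∧ j ≠ k := by
  obtain ⟨i, hi⟩ := Finset.card_pos.mp hA
  have h1 : 0 < (B.erase i).card := by
    have := Finset.pred_card_le_card_erase (s := B) (a := i); omega
  obtain ⟨j, hj⟩ := Finset.card_pos.mp h1
  have h2 : 0 < ((C.erase i).erase j).card := by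
    have := Finset.pred_card_le_card_erase (s := C) (a := i)
    have := Finset.pred_card_le_card_erase (s := C.erase i) (a := j)
    omega
  obtain ⟨k, hk⟩ := Finset.card_pos.mp h2
  simp only [Finset.mem_erase] at hj hk
  exact ⟨i, j, k, hi, hj.2, hk.2.2, fun h => hj.1 h.symm, fun h => hk.2.1 h.symm,
    fun h => hk.1 h.symm⟩

lemma sdr (A B C : Finset (Fin 5))
    (h : ¬ ∃ i j k, i ∈ A ∧ j ∈ B ∧ k ∈ C ∧ i ≠ j ∧ i ≠ k ∧ j ≠ k) :
    A.card = 0 ∨ B.card = 0 ∨ C.card = 0 ∨ A.card + B.card + C.card ≤ 7 := by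
  by_contra hc
  have hA : A.card ≤ 5 := by simpa using Finset.card_le_univ A
  have hB : B.card ≤ 5 := by simpa using Finset.card_le_univ B
  have hC : C.card ≤ 5 := by simpa using Finset.card_le_univ C
  have : (2 ≤ B.card ∧ 3 ≤ C.card) ∨ (3 ≤ B.card ∧ 2 ≤ C.card) ∨ (2 ≤ A.card ∧ 3 ≤ C.card) ∨
      (3 ≤ A.card ∧ 2 ≤ C.card) ∨ (2 ≤ A.card ∧ 3 ≤ B.card) ∨ (3 ≤ A.card ∧ 2 ≤ B.card) := by
    omega
  apply h
  rcases this with h | h | h | h | h | h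
  · exact sdr_aux A B C (by omega) h.1 h.2
  · obtain ⟨i, j, k, h1, h2, h3, h4, h5, h6⟩ := sdr_aux A C B (by omega) h.2 h.1
    exact ⟨i, k, j, h1, h3, h2, h5, h4, h6.symm⟩
  · obtain ⟨i, j, k, h1, h2, h3, h4, h5, h6⟩ := sdr_aux B A C (by omega) h.1 h.2
    exact ⟨j, i, k, h2, h1, h3, h4.symm, h6, h5⟩
  · obtain ⟨i, j, k, h1, h2, h3, h4, h5, h6⟩ := sdr_aux B C A (by omega) h.2 h.1
    exact ⟨k, i, j, h3, h1, h2, h5.symm, h6.symm, h4⟩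
  · obtain ⟨i, j, k, h1, h2, h3, h4, h5, h6⟩ := sdr_aux C A B (by omega) h.1 h.2
    exact ⟨j, k, i, h2, h3, h1, h6, h4.symm, h5.symm⟩
  · obtain ⟨i, j, k, h1, h2, h3, h4, h5, h6⟩ := sdr_aux C B A (by omega) h.2 h.1
    exact ⟨k, j, i, h3, h2, h1, h6.symm, h5.symm, h4.symm⟩

lemma sum_split3 {V : Type*} [DecidableEq V] (S : Finset V) {a b c : V} (ha : a ∈ S) (hb : b ∈ S)
    (hc : c ∈ S) (hab : a ≠ b) (hac : a ≠ c) (hbc : b ≠ c) (f : V → ℕ) :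
    ∑ x ∈ S, f x = f a + f b + f c + ∑ x ∈ ((S.erase a).erase b).erase c, f x := by
  have hb' : b ∈ S.erase a := by simp [hb, hab.symm]
  have hc' : c ∈ (S.erase a).erase b := by simp [hc, hac.symm, hbc.symm]
  rw [← Finset.add_sum_erase _ f ha, ← Finset.add_sum_erase _ f hb',
    ← Finset.add_sum_erase _ f hc']
  omega

lemma E_erase {V : Type*} [DecidableEq V] (μ : V → V → ℕ) (hs : ∀ x y, μ x y = μ y x)
    (h0 : ∀ x, μ x x = 0) (S : Finset V) {a : V} (ha : a ∈ S) :
    ∑ x ∈ S, ∑ y ∈ S, μ x y =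
      ∑ x ∈ S.erase a, ∑ y ∈ S.erase a, μ x y + 2 * ∑ y ∈ S, μ a y := by
  rw [← Finset.add_sum_erase _ _ ha]
  have h1 : ∑ x ∈ S.erase a, ∑ y ∈ S, μ x y
      = ∑ x ∈ S.erase a, (μ x a + ∑ y ∈ S.erase a, μ x y) :=
    Finset.sum_congr rfl fun x _ => (Finset.add_sum_erase _ _ ha).symm
  have h2 : ∑ x ∈ S.erase a, μ x a = ∑ y ∈ S, μ a y := by
    rw [← Finset.add_sum_erase S _ ha, h0, zero_add]
    exact Finset.sum_congr rfl fun x _ => hs _ _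
  rw [h1, Finset.sum_add_distrib, h2]
  omega

lemma main_bound {V : Type*} [DecidableEq V] (μ : V → V → ℕ) (hs : ∀ x y, μ x y = μ y x)
    (h0 : ∀ x, μ x x = 0) (h5 : ∀ x y, μ x y ≤ 5)
    (L : ∀ a b c d, a ≠ b → a ≠ c → a ≠ d → b ≠ c → b ≠ d → c ≠ d →
      μ a b + μ c d ≤ 5 ∨ μ a c + μ b d ≤ 5 ∨ μ a d + μ b c ≤ 5 ∨
        μ a b + μ c d + μ a c + μ b d + μ a d + μ b c ≤ 22) :
    ∀ m : ℕ, 1 ≤ m → ∀ S : Finset V, S.card = m →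
      2 * (∑ x ∈ S, ∑ y ∈ S, μ x y) + 9 ≤ 7 * m ^ 2 + 2 * m := by
  intro m
  induction m using Nat.strong_induction_on with
  | _ m ih =>
  intro hm S hS
  have hD : ∀ k, (∀ x y, x ≠ y → μ x y ≤ k) → ∀ x ∈ S, ∑ y ∈ S, μ x y ≤ (m - 1) * k := by
    intro k hk x hx
    rw [← Finset.add_sum_erase _ _ hx, h0, zero_add]
    have := Finset.sum_le_card_nsmul (S.erase x) (μ x) k
      (fun y hy => hk _ _ (Finset.ne_of_mem_erase hy).symm)
    rwa [Finset.card_erase_of_mem hx, hS, smul_eq_mul] at this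
  rcases Nat.lt_or_ge m 4 with h4 | h4
  · have h := Finset.sum_le_card_nsmul S (fun x => ∑ y ∈ S, μ x y) _
      (hD 5 (fun x y _ => h5 x y))
    rw [hS, smul_eq_mul] at h
    interval_cases m <;> omega
  by_contra hcon
  push Not at hcon
  obtain ⟨M, rfl⟩ : ∃ M, m = M + 3 := ⟨m - 3, by omega⟩
  obtain ⟨D, hDdef⟩ : ∃ D : V → ℕ, ∀ x, D x = ∑ y ∈ S, μ x y := ⟨_, fun _ => rfl⟩
  have e1 : ∀ a ∈ S, 14 * M + 37 < 4 * D a := by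
    intro a ha
    have h1 := E_erase μ hs h0 S ha
    have h2 := ih (M + 2) (by omega) (by omega) (S.erase a)
      (by rw [Finset.card_erase_of_mem ha]; omega)
    ring_nf at h1 h2 hcon ⊢
    simp only [hDdef]
    omega
  have e2 : ∀ a ∈ S, ∀ b ∈ S, a ≠ b → 28 * M + 60 + 4 * μ a b < 4 * (D a + D b) := by
    intro a ha b hb hab
    have hb' : b ∈ S.erase a := by simp [hb, hab.symm]
    have h1 := E_erase μ hs h0 S ha
    have h1' := E_erase μ hs h0 (S.erase a) hb'
    have h2 := ih (M + 1) (by omega) (by omega) ((S.erase a).erase b)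
      (by rw [Finset.card_erase_of_mem hb', Finset.card_erase_of_mem ha]; omega)
    have h3 := Finset.add_sum_erase S (μ b) ha
    have h4 := hs a b
    ring_nf at h1 h1' h2 hcon ⊢
    simp only [hDdef]
    omega
  have e3 : ∀ a ∈ S, ∀ b ∈ S, ∀ c ∈ S, a ≠ b → a ≠ c → b ≠ c →
      42 * M + 69 + 4 * (μ a b + μ a c + μ b c) < 4 * (D a + D b + D c) := by
    intro a ha b hb c hc hab hac hbc
    have hb' : b ∈ S.erase a := by simp [hb, hab.symm]
    have hc' : c ∈ (S.erase a).erase b := by simp [hc, hac.symm, hbc.symm]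
    have h1 := E_erase μ hs h0 S ha
    have h1' := E_erase μ hs h0 (S.erase a) hb'
    have h1'' := E_erase μ hs h0 ((S.erase a).erase b) hc'
    have h2 := ih M (by omega) (by omega) (((S.erase a).erase b).erase c)
      (by rw [Finset.card_erase_of_mem hc', Finset.card_erase_of_mem hb',
            Finset.card_erase_of_mem ha]; omega)
    have h3 := Finset.add_sum_erase S (μ b) ha
    have h3' := Finset.add_sum_erase S (μ c) ha
    have h3'' := Finset.add_sum_erase (S.erase a) (μ c) hb'
    have h4 := hs a b
    have h4' := hs a c
    have h4'' := hs b c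
    ring_nf at h1 h1' h1'' h2 hcon ⊢
    simp only [hDdef]
    omega
  -- weighted bound for a triangle
  have w3 : ∀ a ∈ S, ∀ b ∈ S, ∀ c ∈ S, a ≠ b → a ≠ c → b ≠ c → ∀ p q r : ℕ,
      (∀ x ∈ S, x ≠ a → x ≠ b → x ≠ c → p * (μ a x + μ b x + μ c x) + q * μ c x ≤ r) →
      p * (D a + D b + D c) + q * D c ≤
        p * (2 * (μ a b + μ a c + μ b c)) + q * (μ a c + μ b c) + M * r := by
    intro a ha b hb c hc hab hac hbc p q r h
    have hb' : b ∈ S.erase a := by simp [hb, hab.symm]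
    have hc' : c ∈ (S.erase a).erase b := by simp [hc, hac.symm, hbc.symm]
    have hsum := Finset.sum_le_card_nsmul (((S.erase a).erase b).erase c)
      (fun x => p * (μ a x + μ b x + μ c x) + q * μ c x) r (by
        intro x hx
        simp only [Finset.mem_erase] at hx
        exact h x hx.2.2.2 hx.2.2.1 hx.2.1 hx.1)
    rw [Finset.card_erase_of_mem hc', Finset.card_erase_of_mem hb',
            Finset.card_erase_of_mem ha, hS, smul_eq_mul] at hsum
    have hspl := sum_split3 S ha hb hc hab hac hbc
      (fun x => p * (μ a x + μ b x + μ c x) + q * μ c x)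
    have hl : ∑ x ∈ S, (p * (μ a x + μ b x + μ c x) + q * μ c x)
        = p * (D a + D b + D c) + q * D c := by
      simp only [hDdef, Finset.sum_add_distrib, ← Finset.mul_sum]
    have hM : M + 3 - 1 - 1 - 1 = M := by omega
    rw [hM] at hsum
    rw [hl] at hspl
    simp only [h0] at hspl
    rw [hspl, hs b a, hs c a, hs c b]
    nlinarith [hsum]
  have w2 : ∀ a ∈ S, ∀ b ∈ S, a ≠ b →
      (∀ x ∈ S, x ≠ a → x ≠ b → μ a x + μ b x ≤ 7) → False := by
    intro a ha b hb hab h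
    have hb' : b ∈ S.erase a := by simp [hb, hab.symm]
    have hsum := Finset.sum_le_card_nsmul ((S.erase a).erase b)
      (fun x => μ a x + μ b x) 7 (by
        intro x hx
        simp only [Finset.mem_erase] at hx
        exact h x hx.2.2 hx.2.1 hx.1)
    rw [Finset.card_erase_of_mem hb',
            Finset.card_erase_of_mem ha, hS, smul_eq_mul] at hsum
    have h1 := Finset.add_sum_erase S (fun x => μ a x + μ b x) ha
    have h2 := Finset.add_sum_erase (S.erase a) (fun x => μ a x + μ b x) hb'
    have hl : ∑ x ∈ S, (μ a x + μ b x) = D a + D b := by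
      simp only [hDdef, Finset.sum_add_distrib]
    have := e2 a ha b hb hab
    have := h5 a b
    simp only [h0, hs b a] at h1 h2
    omega
  -- every triangle has a vertex sending at least 11
  have t10 : ∀ a ∈ S, ∀ b ∈ S, ∀ c ∈ S, a ≠ b → a ≠ c → b ≠ c →
      ∃ x ∈ S, x ≠ a ∧ x ≠ b ∧ x ≠ c ∧ 11 ≤ μ a x + μ b x + μ c x := by
    intro a ha b hb c hc hab hac hbc
    by_contra h
    push Not at h
    have := w3 a ha b hb c hc hab hac hbc 1 0 10 (by
      intro x hx h1 h2 h3
      have := h x hx h1 h2 h3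
      omega)
    have := e3 a ha b hb c hc hab hac hbc
    have := h5 a b
    have := h5 a c
    have := h5 b c
    omega
  have t15 : ∀ a ∈ S, ∀ b ∈ S, ∀ c ∈ S, a ≠ b → a ≠ c → b ≠ c →
      μ a b + μ a c + μ b c ≤ 14 := by
    intro a ha b hb c hc hab hac hbc
    obtain ⟨x, hx, h1, h2, h3, h4⟩ := t10 a ha b hb c hc hab hac hbc
    have := L a b c x hab hac h1.symm hbc h2.symm h3.symm
    have := h5 a b
    have := h5 a c
    have := h5 b c
    have := h5 a x
    have := h5 b x
    have := h5 c x
    omega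
  have t14' : ∀ a ∈ S, ∀ b ∈ S, ∀ c ∈ S, a ≠ b → a ≠ c → b ≠ c →
      ¬ (μ a b = 4 ∧ μ a c = 5 ∧ μ b c = 5) := by
    rintro a ha b hb c hc hab hac hbc ⟨hx1, hx2, hx3⟩
    have := w3 a ha b hb c hc hab hac hbc 4 1 45 (by
      intro x hx h1 h2 h3
      have := L a b c x hab hac h1.symm hbc h2.symm h3.symm
      have := t15 a ha c hc x hx hac h1.symm h3.symm
      have := t15 b hb c hc x hx hbc h2.symm h3.symm
      have := h5 a x
      have := h5 b x
      have := h5 c x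
      omega)
    have := e3 a ha b hb c hc hab hac hbc
    have := e1 c hc
    omega
  have t14 : ∀ a ∈ S, ∀ b ∈ S, ∀ c ∈ S, a ≠ b → a ≠ c → b ≠ c →
      μ a b + μ a c + μ b c ≤ 13 := by
    intro a ha b hb c hc hab hac hbc
    have := t15 a ha b hb c hc hab hac hbc
    have := t14' a ha b hb c hc hab hac hbc
    have := t14' a ha c hc b hb hac hab hbc.symm
    have := t14' b hb c hc a ha hbc hab.symm hac.symm
    rw [hs c b] at *
    rw [hs b a, hs c a] at *
    have := h5 a b
    have := h5 a c
    have := h5 b c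
    omega
  have t13' : ∀ a ∈ S, ∀ b ∈ S, ∀ c ∈ S, a ≠ b → a ≠ c → b ≠ c →
      ¬ (μ a b = 3 ∧ μ a c = 5 ∧ μ b c = 5) := by
    rintro a ha b hb c hc hab hac hbc ⟨hx1, hx2, hx3⟩
    have := w3 a ha b hb c hc hab hac hbc 1 1 14 (by
      intro x hx h1 h2 h3
      have := L a b c x hab hac h1.symm hbc h2.symm h3.symm
      have := t14 a ha c hc x hx hac h1.symm h3.symm
      have := t14 b hb c hc x hx hbc h2.symm h3.symm
      have := h5 a x
      have := h5 b x
      have := h5 c x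
      omega)
    have := e3 a ha b hb c hc hab hac hbc
    have := e1 c hc
    omega
  have t13 : ∀ a ∈ S, ∀ b ∈ S, ∀ c ∈ S, a ≠ b → a ≠ c → b ≠ c →
      μ a b + μ a c + μ b c ≤ 12 := by
    intro a ha b hb c hc hab hac hbc
    have := t14 a ha b hb c hc hab hac hbc
    have := t13' a ha b hb c hc hab hac hbc
    have := t13' a ha c hc b hb hac hab hbc.symm
    have := t13' b hb c hc a ha hbc hab.symm hac.symm
    rw [hs c b] at *
    rw [hs b a, hs c a] at *
    have := h5 a b
    have := h5 a c
    have := h5 b c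
    obtain ⟨x, hx, h1, h2, h3, h4⟩ := t10 a ha b hb c hc hab hac hbc
    have := L a b c x hab hac h1.symm hbc h2.symm h3.symm
    have := t14 a ha b hb x hx hab h1.symm h2.symm
    have := t14 a ha c hc x hx hac h1.symm h3.symm
    have := t14 b hb c hc x hx hbc h2.symm h3.symm
    have := h5 a x
    have := h5 b x
    have := h5 c x
    omega
  have p5 : ∀ a ∈ S, ∀ b ∈ S, a ≠ b → μ a b ≤ 4 := by
    intro a ha b hb hab
    by_contra h
    refine w2 a ha b hb hab fun x hx h1 h2 => ?_
    have := t13 a ha b hb x hx hab h1.symm h2.symm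
    omega
  have p4 : ∀ a ∈ S, ∀ b ∈ S, a ≠ b → μ a b ≤ 3 := by
    intro a ha b hb hab
    by_contra h
    refine w2 a ha b hb hab fun c hc h1 h2 => ?_
    have := p5 a ha b hb hab
    have := p5 a ha c hc h1.symm
    have := p5 b hb c hc h2.symm
    obtain ⟨x, hx, g1, g2, g3, h4⟩ := t10 a ha b hb c hc hab h1.symm h2.symm
    have := L a b c x hab h1.symm g1.symm h2.symm g2.symm g3.symm
    have := p5 a ha x hx g1.symm
    have := p5 b hb x hx g2.symm
    have := p5 c hc x hx g3.symm
    omega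
  obtain ⟨a, ha⟩ : S.Nonempty := Finset.card_pos.mp (by omega)
  have h1 := e1 a ha
  have h2 : D a ≤ (M + 2) * 3 := by
    simp only [hDdef]
    rw [← Finset.add_sum_erase _ _ ha, h0, zero_add]
    have := Finset.sum_le_card_nsmul (S.erase a) (μ a) 3
      (fun y hy => p4 a ha y (Finset.mem_of_mem_erase hy) (Finset.ne_of_mem_erase hy).symm)
    rw [Finset.card_erase_of_mem ha, hS, smul_eq_mul] at this
    exact this
  omega

open Classical in
lemma multi_bound {m : ℕ} (hm : 1 ≤ m) (G : Fin 5 → SimpleGraph (Fin m))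
    (hG : ¬ HasThreeCrossingPairs G) :
    4 * (∑ i, (G i).edgeSet.ncard) + 9 ≤ 7 * m ^ 2 + 2 * m := by
  set F : Fin m → Fin m → Finset (Fin 5) := fun x y => Finset.univ.filter fun i => (G i).Adj x y
    with hF
  have key := main_bound (fun x y => (F x y).card)
    (by intro x y; simp only [hF, SimpleGraph.adj_comm])
    (by intro x; simp [hF])
    (by intro x y; simpa using Finset.card_le_univ (F x y))
    (by
      intro a b c d hab hac had hbc hbd hcd
      have hu : ∀ A B : Finset (Fin 5), A.card + B.card ≤ 5 + (A ∩ B).card := by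
        intro A B
        have h1 := Finset.card_union_add_card_inter A B
        have h2 : (A ∪ B).card ≤ 5 := by simpa using Finset.card_le_univ (A ∪ B)
        omega
      have := sdr (F a b ∩ F c d) (F a c ∩ F b d) (F a d ∩ F b c) (by
        rintro ⟨i, j, k, h1, h2, h3, hij, hik, hjk⟩
        simp only [hF, Finset.mem_inter, Finset.mem_filter, Finset.mem_univ, true_and] at h1 h2 h3
        exact hG ⟨i, j, k, hij, hik, hjk, a, b, c, d, hab, hac, had, hbc, hbd, hcd,
          h1.1, h1.2, h2.1, h2.2, h3.1, h3.2⟩)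
      have h1 := hu (F a b) (F c d)
      have h2 := hu (F a c) (F b d)
      have h3 := hu (F a d) (F b c)
      omega)
    m hm Finset.univ (by simp)
  have hsum : ∑ x, ∑ y, (F x y).card = 2 * ∑ i, (G i).edgeSet.ncard := by
    have h1 : ∀ i, 2 * (G i).edgeSet.ncard = ∑ x, ∑ y, if (G i).Adj x y then 1 else 0 := by
      intro i
      rw [← SimpleGraph.coe_edgeFinset, Set.ncard_coe_finset,
        ← SimpleGraph.sum_degrees_eq_twice_card_edges]
      refine Finset.sum_congr rfl fun x _ => ?_
      rw [← SimpleGraph.card_neighborFinset_eq_degree, SimpleGraph.neighborFinset_eq_filter,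
        Finset.card_filter]
    rw [Finset.mul_sum]
    simp only [h1, hF, Finset.card_filter]
    symm
    rw [Finset.sum_comm]
    exact Finset.sum_congr rfl fun x _ => Finset.sum_comm
  rw [hsum] at key
  omega

lemma choose3 (i : ℕ) : 6 * (i + 1).choose 3 + (i + 1) * i = (i + 1) * i * i := by
  induction i with
  | zero => decide
  | succ i ih =>
    have h2 : 2 * (i + 1).choose 2 = (i + 1) * i := by
      have := Nat.triangle_succ i
      rw [Nat.choose_two_right]
      have h := Nat.even_mul_pred_self (i + 1)
      exact Nat.two_mul_div_two_of_even h
    rw [Nat.choose_succ_succ' (i + 1) 2]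
    nlinarith

lemma b_odd (i : ℕ) : 2 * b (2 * i + 3) = 2 * i ^ 3 + 7 * i ^ 2 + 7 * i + 2 := by
  unfold b
  have e1 : (2 * i + 3) / 2 = i + 1 := by omega
  have e2 : (2 * i + 3 + 1) / 2 = i + 1 + 1 := by omega
  rw [e1, e2]
  have h1 := choose3 (2 * i + 2)
  have h2 := choose3 i
  have h3 := choose3 (i + 1)
  rw [show 2 * i + 2 + 1 = 2 * i + 3 by ring] at h1
  generalize (2 * i + 3).choose 3 = A at *
  generalize (i + 1).choose 3 = B at *
  generalize (i + 1 + 1).choose 3 = C at *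
  ring_nf at *
  omega

theorem b_f5_inequality_six (n : ℕ) (hn : 9 ≤ n) (hodd : Odd n)
    (G : Fin 5 → SimpleGraph (Fin (n - 6))) (hG : ¬ HasThreeCrossingPairs G) :
    (b (n - 6) + (n - 9) / 2) + (∑ i, (G i).edgeSet.ncard) + (n - 6).choose 2 +
        10 * (n - 6) + 20 < b n := by
  have h1 := multi_bound (by omega) G hG
  generalize (∑ i, (G i).edgeSet.ncard) = e at *
  obtain ⟨k, hk⟩ := hodd
  obtain ⟨i, rfl⟩ : ∃ i, n = 2 * i + 9 := ⟨k - 4, by omega⟩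
  have e1 : 2 * i + 9 - 6 = 2 * i + 3 := by omega
  have e2 : (2 * i + 9 - 9) / 2 = i := by omega
  rw [e1] at h1
  rw [e2, e1]
  have h2 := b_odd i
  have h3 := b_odd (i + 3)
  rw [show 2 * (i + 3) + 3 = 2 * i + 9 by ring] at h3
  have h4 : 2 * (2 * i + 3).choose 2 = (2 * i + 3) * (2 * i + 2) := by
    rw [Nat.choose_two_right]
    exact Nat.two_mul_div_two_of_even (Nat.even_mul_pred_self (2 * i + 3))
  generalize (2 * i + 3).choose 2 = C at *
  generalize b (2 * i + 3) = B at *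
  generalize b (2 * i + 9) = B' at *
  ring_nf at *
  omega
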